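/- arXiv:1407.3041 — 2 statements merged into one kernel-verified Lean document; each statement's English description precedes it below -/
import Mathlib

section
/- Let G = (V, E) be a strongly connected digraph with at least two vertices and let s ∈ V. An edge e = (u, w) ∈ E is a strong bridge of G if and only if (u, w) is a bridge of the flow graph G(s) or (w, u) is a bridge of the flow graph G^R(s). -/
variable {V : Type*}

/-- `p` is a path from `u` to `w` in the digraph with edge set `E`:
a nonempty list of vertices starting at `u`, ending at `w`, with consecutive edges in `E`. -/
def IsPathFrom (E : Set (V × V)) (u w : V) (p : List V) : Prop :=
  p.head? = some u ∧ p.getLast? = some w ∧ p.Chain' (fun a b => (a, b) ∈ E)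

/-- There is a path from `u` to `w` in the digraph with edge set `E`. -/
def Reaches (E : Set (V × V)) (u w : V) : Prop :=
  ∃ p, IsPathFrom E u w p

/-- Every vertex has a path to every other vertex. -/
def StronglyConnected (E : Set (V × V)) : Prop :=
  ∀ u w : V, Reaches E u w

/-- `v` and `w` are 2-edge-connected: `v = w` or, for every edge `e`,
there are paths from `v` to `w` and from `w` to `v` avoiding `e`. -/
def TwoEdgeConn (E : Set (V × V)) (v w : V) : Prop :=
  v = w ∨ ∀ e ∈ E, Reaches (E \ {e}) v w ∧ Reaches (E \ {e}) w v

/-- `w` is 2-edge-connected from `v`: for every edge `e` there is a path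
from `v` to `w` avoiding `e`. -/
def TwoEdgeConnFrom (E : Set (V × V)) (v w : V) : Prop :=
  ∀ e ∈ E, Reaches (E \ {e}) v w

/-- `u` dominates `w` in the flow graph with start vertex `s`:
every path from `s` to `w` contains `u`. -/
def Dominates (E : Set (V × V)) (s u w : V) : Prop :=
  ∀ p, IsPathFrom E s w p → u ∈ p

/-- `(u, w)` is a bridge of the flow graph with start vertex `s`:
every path from `s` to `w` contains the edge `(u, w)`. -/
def IsBridge (E : Set (V × V)) (s u w : V) : Prop :=
  (u, w) ∈ E ∧ ∀ p, IsPathFrom E s w p → (u, w) ∈ p.zip p.tail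

/-- `w` is marked in the flow graph with start vertex `s`: some bridge ends at `w`. -/
def Marked (E : Set (V × V)) (s w : V) : Prop :=
  ∃ u, IsBridge E s u w

/-- The reverse digraph: every edge direction is reversed. -/
def reverseE (E : Set (V × V)) : Set (V × V) :=
  {e | (e.2, e.1) ∈ E}

/-- `u` and `w` are mutually reachable. -/
def MutualReach (E : Set (V × V)) (u w : V) : Prop :=
  Reaches E u w ∧ Reaches E w u

/-- The number of strongly connected components: the number of equivalence
classes of the mutual-reachability relation. -/
noncomputable def numSCC (E : Set (V × V)) : ℕ :=
  Nat.card (Quot (MutualReach E))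

/-- `e` is a strong bridge: removing it increases the number of strongly
connected components. -/
def IsStrongBridge (E : Set (V × V)) (e : V × V) : Prop :=
  e ∈ E ∧ numSCC E < numSCC (E \ {e})

/-- `d` is the immediate dominator of `w` in the flow graph with start vertex `s`:
`d` is a proper dominator of `w` dominated by every proper dominator of `w`. -/
def ImmDomIs (E : Set (V × V)) (s w d : V) : Prop :=
  Dominates E s d w ∧ d ≠ w ∧ ∀ x, Dominates E s x w → x ≠ w → Dominates E s x d

/-- `r` is the deepest marked dominator `r_v` of `v`: either `r` is a marked
dominator of `v` dominated by every marked dominator of `v`, or no marked vertex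
dominates `v` and `r = s`. -/
def DeepestMarkedDomIs (E : Set (V × V)) (s v r : V) : Prop :=
  (Marked E s r ∧ Dominates E s r v ∧
    ∀ x, Marked E s x → Dominates E s x v → Dominates E s x r)
  ∨ (r = s ∧ ∀ x, Marked E s x → ¬ Dominates E s x v)

/-- `T(r)`: the vertices whose deepest marked dominator is `r`. -/
def Tset (E : Set (V × V)) (s r : V) : Set V :=
  {v | DeepestMarkedDomIs E s v r}

/-- The roots of the decomposition of the dominator tree: `s` and the marked vertices. -/
def IsRoot (E : Set (V × V)) (s r : V) : Prop :=
  r = s ∨ Marked E s r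

/-- `z` is a marked child (in the dominator tree) of a boundary vertex of `T(r)`. -/
def MarkedChildOfBoundary (E : Set (V × V)) (s r z : V) : Prop :=
  Marked E s z ∧ ∃ x ∈ Tset E s r, ImmDomIs E s z x

/-- The vertex set `V_r` of the auxiliary graph `G_r` (with `dr` playing the role
of `d(r)` when `r ≠ s`): the ordinary vertices `T(r)`, the marked children of
boundary vertices of `T(r)`, and (if `r ≠ s`) the vertex `d(r)`. -/
def auxVerts (E : Set (V × V)) (s r dr : V) : Set V :=
  Tset E s r ∪ {z | MarkedChildOfBoundary E s r z} ∪ {x | r ≠ s ∧ x = dr}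

/-- The edge set `E_r` of the auxiliary graph `G_r` (with `dr` playing the role of
`d(r)` when `r ≠ s`): edges of `G` between ordinary vertices; the edge `(v, w)` for
each boundary vertex `v ∈ T(r)` and marked child `w` of `v`; the edge `(d(r), r)` if
`r ≠ s`; and the shortcut edges of types (a), (b), (c). -/
def auxEdges (E : Set (V × V)) (s r dr : V) : Set (V × V) :=
  {e | e ∈ E ∧ e.1 ∈ Tset E s r ∧ e.2 ∈ Tset E s r} ∪
  {e | e.1 ∈ Tset E s r ∧ Marked E s e.2 ∧ ImmDomIs E s e.2 e.1} ∪
  {e | r ≠ s ∧ e = (dr, r)} ∪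
  {e | ∃ u v, (u, v) ∈ E ∧ u ∈ Tset E s r ∧ ¬ Dominates E s r v ∧ e = (u, dr)} ∪
  {e | ∃ u v z, (u, v) ∈ E ∧ v ∈ Tset E s r ∧ Dominates E s r u ∧ u ∉ Tset E s r ∧
      MarkedChildOfBoundary E s r z ∧ Dominates E s z u ∧ e = (z, v)} ∪
  {e | ∃ u v z, (u, v) ∈ E ∧ Dominates E s r u ∧ u ∉ Tset E s r ∧ ¬ Dominates E s r v ∧
      MarkedChildOfBoundary E s r z ∧ Dominates E s z u ∧ e = (z, dr)}

/-!
A path that uses the deleted edge `(u, w)` can be repaired as soon as `w` is still reachable from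
`u`. Hence deleting `(u, w)` preserves strong connectivity exactly when it preserves a path from
`s` to `w` and one from `u` to `s`: their concatenation bypasses the edge. The failure of the first
says that `(u, w)` is a bridge of `G(s)`; reversing all edges, the failure of the second says that
`(w, u)` is a bridge of `G^R(s)`.
-/

section

variable {E : Set (V × V)} {s u v w : V}

theorem isChain_iff_forall_mem_zip_tail {p : List V} :
    p.IsChain (fun a b => (a, b) ∈ E) ↔ ∀ e ∈ p.zip p.tail, e ∈ E := by
  induction p using List.twoStepInduction with
  | nil => simp
  | singleton a => simp
  | cons_cons a b p _ ih =>
    simpa only [List.isChain_cons_cons, List.tail_cons, List.zip_cons_cons, List.forall_mem_cons]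
      using and_congr_right fun _ => ih b

theorem isPathFrom_iff_forall_mem_zip_tail {p : List V} :
    IsPathFrom E u w p ↔
      p.head? = some u ∧ p.getLast? = some w ∧ ∀ e ∈ p.zip p.tail, e ∈ E :=
  and_congr_right' (and_congr_right' isChain_iff_forall_mem_zip_tail)

theorem isPathFrom_diff_singleton_iff {e : V × V} {p : List V} :
    IsPathFrom (E \ {e}) u w p ↔ IsPathFrom E u w p ∧ e ∉ p.zip p.tail := by
  simp only [isPathFrom_iff_forall_mem_zip_tail, Set.mem_sdiff, Set.mem_singleton_iff]
  grind

theorem isBridge_iff_not_reaches_diff_singleton :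
    IsBridge E s u w ↔ (u, w) ∈ E ∧ ¬ Reaches (E \ {(u, w)}) s w := by
  simp only [IsBridge, Reaches, isPathFrom_diff_singleton_iff, not_exists, not_and, not_not]

theorem reaches_iff_reflTransGen :
    Reaches E u w ↔ Relation.ReflTransGen (fun a b => (a, b) ∈ E) u w := by
  constructor
  · rintro ⟨p, hhead, hlast, hchain⟩
    obtain ⟨t, rfl⟩ := List.head?_eq_some_iff.1 hhead
    exact List.relationReflTransGen_of_exists_isChain_cons t hchain
      (List.getLast_of_getLast?_eq_some hlast)
  · intro h
    obtain ⟨t, hchain, hlast⟩ := List.exists_isChain_cons_of_relationReflTransGen h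
    exact ⟨u :: t, rfl, hlast ▸ List.getLast?_eq_some_getLast _, hchain⟩

theorem Reaches.refl (E : Set (V × V)) (u : V) : Reaches E u u :=
  reaches_iff_reflTransGen.2 .refl

theorem Reaches.trans (huv : Reaches E u v) (hvw : Reaches E v w) : Reaches E u w :=
  reaches_iff_reflTransGen.2 <|
    (reaches_iff_reflTransGen.1 huv).trans (reaches_iff_reflTransGen.1 hvw)

theorem Reaches.of_edge (huw : (u, w) ∈ E) : Reaches E u w :=
  reaches_iff_reflTransGen.2 (.single huw)

theorem Reaches.of_forall_edge_reaches {F : Set (V × V)} (huw : Reaches E u w)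
    (hEF : ∀ a b, (a, b) ∈ E → Reaches F a b) : Reaches F u w := by
  rw [reaches_iff_reflTransGen] at huw
  induction huw with
  | refl => exact .refl F u
  | tail _ hbc ih => exact ih.trans (hEF _ _ hbc)

theorem Reaches.diff_singleton {a b : V} (hab : Reaches E a b)
    (huw : Reaches (E \ {(u, w)}) u w) : Reaches (E \ {(u, w)}) a b := by
  refine hab.of_forall_edge_reaches fun c d hcd => ?_
  by_cases heq : (c, d) = (u, w)
  · obtain ⟨rfl, rfl⟩ := Prod.mk.inj heq
    exact huw
  · exact .of_edge ⟨hcd, heq⟩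

theorem StronglyConnected.diff_singleton_iff (hE : StronglyConnected E) (s : V) :
    StronglyConnected (E \ {(u, w)}) ↔
      Reaches (E \ {(u, w)}) s w ∧ Reaches (E \ {(u, w)}) u s :=
  ⟨fun h => ⟨h s w, h u s⟩,
    fun ⟨hsw, hus⟩ a b => (hE a b).diff_singleton (hus.trans hsw)⟩

theorem reverseE_diff_singleton : reverseE (E \ {(u, w)}) = reverseE E \ {(w, u)} := by
  ext ⟨a, b⟩
  simp only [reverseE, Set.mem_ofPred_eq, Set.mem_sdiff, Set.mem_singleton_iff, Prod.mk.injEq,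
    and_comm]

theorem reaches_reverseE : Reaches (reverseE E) u w ↔ Reaches E w u := by
  simp only [reaches_iff_reflTransGen]
  exact Relation.reflTransGen_swap

theorem isBridge_reverseE_iff_not_reaches_diff_singleton :
    IsBridge (reverseE E) s w u ↔ (u, w) ∈ E ∧ ¬ Reaches (E \ {(u, w)}) u s := by
  rw [isBridge_iff_not_reaches_diff_singleton, ← reverseE_diff_singleton, reaches_reverseE]
  rfl

theorem mutualReach_equivalence (E : Set (V × V)) : Equivalence (MutualReach E) where
  refl a := ⟨.refl E a, .refl E a⟩
  symm h := ⟨h.2, h.1⟩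
  trans hab hbc := ⟨hab.1.trans hbc.1, hbc.2.trans hab.2⟩

theorem subsingleton_quot_mutualReach_iff :
    Subsingleton (Quot (MutualReach E)) ↔ StronglyConnected E := by
  rw [subsingleton_iff]
  simp only [Quot.mk_surjective.forall₂, Quot.eq, (mutualReach_equivalence E).eqvGen_iff]
  exact ⟨fun h a b => (h a b).1, fun h a b => ⟨h a b, h b a⟩⟩

theorem StronglyConnected.numSCC_eq_one [Nonempty V] (hE : StronglyConnected E) :
    numSCC E = 1 :=
  Nat.card_eq_one_iff_unique.2
    ⟨subsingleton_quot_mutualReach_iff.2 hE, Nonempty.map (Quot.mk _) inferInstance⟩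

theorem one_lt_numSCC_iff_not_stronglyConnected [Finite (Quot (MutualReach E))] :
    1 < numSCC E ↔ ¬ StronglyConnected E := by
  rw [numSCC, Finite.one_lt_card_iff_nontrivial, ← not_subsingleton_iff_nontrivial,
    subsingleton_quot_mutualReach_iff]

theorem StronglyConnected.isStrongBridge_iff_not_stronglyConnected (hE : StronglyConnected E)
    {e : V × V} [Finite (Quot (MutualReach (E \ {e})))] :
    IsStrongBridge E e ↔ e ∈ E ∧ ¬ StronglyConnected (E \ {e}) := by
  have : Nonempty V := ⟨e.1⟩
  rw [IsStrongBridge, hE.numSCC_eq_one, one_lt_numSCC_iff_not_stronglyConnected]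

theorem strong_bridge_iff_bridge_of_flow_graphs_general (hE : StronglyConnected E) (s : V)
    [Finite (Quot (MutualReach (E \ {(u, w)})))] :
    IsStrongBridge E (u, w) ↔ IsBridge E s u w ∨ IsBridge (reverseE E) s w u := by
  rw [hE.isStrongBridge_iff_not_stronglyConnected, hE.diff_singleton_iff s, not_and_or,
    isBridge_iff_not_reaches_diff_singleton, isBridge_reverseE_iff_not_reaches_diff_singleton,
    and_or_left]

end

/-- In a strongly connected digraph with at least two vertices, an edge `(u, w)` is a
strong bridge if and only if it is a bridge of the flow graph `G(s)` or `(w, u)` is a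
bridge of the reverse flow graph `G^R(s)`. -/
theorem strong_bridge_iff_bridge_of_flow_graphs
    {V : Type*} [Fintype V] (E : Set (V × V)) (s : V)
    (hsc : StronglyConnected E) (hn : 2 ≤ Nat.card V)
    (u w : V) (he : (u, w) ∈ E) :
    IsStrongBridge E (u, w) ↔ IsBridge E s u w ∨ IsBridge (reverseE E) s w u :=
  strong_bridge_iff_bridge_of_flow_graphs_general hsc s
end

section
/- Let G = (V, E) be a digraph and s ∈ V a vertex from which every vertex is reachable. If (u, w) is a bridge of the flow graph G(s), then u is a proper dominator of w and every proper dominator of w dominates u; that is, u is the immediate dominator d(w) of w. -/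
variable {V : Type*}

/-! The source of a bridge `(u, w)` lies on every path to `w`, and a loop `(w, w)` is not a bridge
because a path can be cut at its first visit to `w`. If `x ≠ w` dominates `w`, take any path to `u`:
either it visits `w`, and already its part up to there contains `x`, or appending the edge `(u, w)`
gives a path to `w`, whose only new vertex is `w`. -/

theorem mem_dropLast_of_mem_zip_tail {α : Type*} {a b : α} :
    ∀ {l : List α}, (a, b) ∈ l.zip l.tail → a ∈ l.dropLast
  | [], h => by simp at h
  | [_], h => by simp at h
  | c :: d :: l, h => by
    simp only [List.tail_cons, List.zip_cons_cons, List.mem_cons, Prod.mk.injEq] at h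
    rw [List.dropLast_cons_cons, List.mem_cons]
    exact h.imp And.left fun htail => mem_dropLast_of_mem_zip_tail (l := d :: l) htail

section

variable {E : Set (V × V)} {s t u w x : V} {p : List V}

namespace IsPathFrom

theorem target_mem (hp : IsPathFrom E s t p) : t ∈ p :=
  List.mem_of_getLast? hp.2.1

theorem concat (hp : IsPathFrom E s u p) (huw : (u, w) ∈ E) : IsPathFrom E s w (p ++ [w]) := by
  obtain ⟨hhead, hlast, hchain⟩ := hp
  refine ⟨by simp [hhead], List.getLast?_concat, hchain.append (.singleton w) ?_⟩
  simpa [hlast] using huw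

theorem exists_prefix_of_mem (hp : IsPathFrom E s t p) (hw : w ∈ p) :
    ∃ q, w ∉ q ∧ q ++ [w] <+: p ∧ IsPathFrom E s w (q ++ [w]) := by
  obtain ⟨q, r, rfl, hwq⟩ := List.eq_append_cons_of_mem hw
  have hprefix : q ++ [w] <+: q ++ w :: r := ⟨r, by simp⟩
  obtain ⟨hhead, -, hchain⟩ := hp
  refine ⟨q, hwq, hprefix, ?_, List.getLast?_concat, hchain.prefix hprefix⟩
  simpa [List.head?_append] using hhead

end IsPathFrom

theorem Dominates.mem_of_mem (hx : Dominates E s x w) (hp : IsPathFrom E s t p) (hw : w ∈ p) :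
    x ∈ p := by
  obtain ⟨q, -, hprefix, hq⟩ := hp.exists_prefix_of_mem hw
  exact hprefix.subset (hx _ hq)

theorem Dominates.dominates_of_edge (hx : Dominates E s x w) (hxw : x ≠ w) (huw : (u, w) ∈ E) :
    Dominates E s x u := by
  intro p hp
  by_cases hw : w ∈ p
  · exact hx.mem_of_mem hp hw
  · have hx_concat : x ∈ p ++ [w] := hx _ (hp.concat huw)
    simpa [hxw] using hx_concat

theorem IsBridge.dominates (hbr : IsBridge E s u w) : Dominates E s u w :=
  fun p hp => (List.of_mem_zip (hbr.2 p hp)).1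

theorem IsBridge.ne (hbr : IsBridge E s u w) (hreach : Reaches E s w) : u ≠ w := by
  rintro rfl
  obtain ⟨p, hp⟩ := hreach
  obtain ⟨q, huq, -, hq⟩ := hp.exists_prefix_of_mem hp.target_mem
  have hu : u ∈ (q ++ [u]).dropLast := mem_dropLast_of_mem_zip_tail (hbr.2 _ hq)
  rw [List.dropLast_concat] at hu
  exact huq hu

theorem bridge_head_is_immediate_dominator_general
    (hreach : Reaches E s w) (hbr : IsBridge E s u w) : ImmDomIs E s w u :=
  ⟨hbr.dominates, hbr.ne hreach, fun _ hx hxw => hx.dominates_of_edge hxw hbr.1⟩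

end

/-- If `(u, w)` is a bridge of the flow graph `G(s)`, then `u` is a proper dominator
of `w` and every proper dominator of `w` dominates `u`; that is, `u` is the immediate
dominator of `w`. -/
theorem bridge_head_is_immediate_dominator
    {V : Type*} [Fintype V] (E : Set (V × V)) (s : V)
    (hreach : ∀ v : V, Reaches E s v)
    (u w : V) (hbr : IsBridge E s u w) :
    Dominates E s u w ∧ u ≠ w ∧
      ∀ x, Dominates E s x w → x ≠ w → Dominates E s x u :=
  bridge_head_is_immediate_dominator_general (hreach w) hbr
end
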